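/- arXiv:2004.05206 — 2 statements merged into one kernel-verified Lean document; each statement's English description precedes it below -/
import Mathlib

section
/- Let 0<p<1 and let (x_n)_{n∈ℕ} together with (x_n*)_{n∈ℕ} be a quasi-greedy basis of ℓ_p. Then the basis is almost greedy: there is a constant C ≥ 1 such that for every f ∈ ℓ_p, every m ≥ 1, and every greedy set A of f with |A| = m, ‖f − S_A f‖_p ≤ C · inf{ ‖f − S_B f‖_p : B ⊆ ℕ, |B| = m }. -/
open scoped BigOperators

open scoped BigOperators

/-- For `0 < p < 1`, membership in `ℓ_p`: the sequence `(|f j|^p)_j` is summable. -/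
def MemLpSeq (p : ℝ) (f : ℕ → ℝ) : Prop := Summable fun j => |f j| ^ p

/-- The `p`-norm `‖f‖_p = (∑_j |f j|^p)^(1/p)`. -/
noncomputable def pNorm (p : ℝ) (f : ℕ → ℝ) : ℝ := (∑' j, |f j| ^ p) ^ (1 / p)

/-- `A` is a greedy set for the coefficient sequence `coef`. -/
def GreedySet (coef : ℕ → ℝ) (A : Finset ℕ) : Prop :=
  ∀ n ∈ A, ∀ k ∉ A, |coef k| ≤ |coef n|

/-- `(x_n)` together with bounded linear functionals `(x_n^*)` is a basis of `ℓ_p`. -/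
structure IsLpBasis (p : ℝ) (x : ℕ → ℕ → ℝ) (xs : ℕ → (ℕ → ℝ) → ℝ) : Prop where
  mem : ∀ n, MemLpSeq p (x n)
  map_add : ∀ n f g, MemLpSeq p f → MemLpSeq p g → xs n (f + g) = xs n f + xs n g
  map_smul : ∀ n (c : ℝ) (f : ℕ → ℝ), MemLpSeq p f → xs n (fun j => c * f j) = c * xs n f
  bdd : ∃ b : ℝ, ∀ n f, MemLpSeq p f → |xs n f| ≤ b * pNorm p f
  biorth : ∀ m n, xs m (x n) = if m = n then (1 : ℝ) else 0
  dense : ∀ f, MemLpSeq p f → ∀ ε > 0, ∃ (A : Finset ℕ) (c : ℕ → ℝ),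
    pNorm p (fun j => f j - ∑ n ∈ A, c n * x n j) < ε
  norm_lb : ∃ c > 0, ∀ n, c ≤ pNorm p (x n)
  norm_ub : ∃ C : ℝ, ∀ n, pNorm p (x n) ≤ C

/-- The basis is quasi-greedy: greedy projections are uniformly bounded. -/
def QuasiGreedy (p : ℝ) (x : ℕ → ℕ → ℝ) (xs : ℕ → (ℕ → ℝ) → ℝ) : Prop :=
  ∃ C ≥ (1 : ℝ), ∀ f, MemLpSeq p f → ∀ A : Finset ℕ,
    GreedySet (fun n => xs n f) A →
    pNorm p (fun j => ∑ n ∈ A, xs n f * x n j) ≤ C * pNorm p f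

/-- The `p`-th power of the `p`-norm. -/
noncomputable def PP (p : ℝ) (f : ℕ → ℝ) : ℝ := ∑' j, |f j| ^ p

/-- Finite linear combination. -/
noncomputable def lc (x : ℕ → ℕ → ℝ) (D : Finset ℕ) (c : ℕ → ℝ) : ℕ → ℝ :=
  fun j => ∑ n ∈ D, c n * x n j

section basic
variable {p : ℝ}

lemma abs_rpow_add (hp0 : 0 < p) (hp1 : p < 1) (a b : ℝ) :
    |a + b| ^ p ≤ |a| ^ p + |b| ^ p :=
  (Real.rpow_le_rpow (abs_nonneg _) (abs_add_le a b) hp0.le).trans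
    (Real.rpow_add_le_add_rpow (abs_nonneg _) (abs_nonneg _) hp0.le hp1.le)

lemma mem_add (hp0 : 0 < p) (hp1 : p < 1) {f g : ℕ → ℝ} (hf : MemLpSeq p f)
    (hg : MemLpSeq p g) : MemLpSeq p (f + g) :=
  Summable.of_nonneg_of_le (fun _ => Real.rpow_nonneg (abs_nonneg _) _)
    (fun j => abs_rpow_add hp0 hp1 (f j) (g j)) (Summable.add hf hg)

lemma mem_smul {f : ℕ → ℝ} (c : ℝ) (hf : MemLpSeq p f) :
    MemLpSeq p (fun j => c * f j) := by
  have : (fun j => |c * f j| ^ p) = fun j => |c| ^ p * |f j| ^ p := by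
    funext j
    rw [abs_mul, Real.mul_rpow (abs_nonneg _) (abs_nonneg _)]
  unfold MemLpSeq
  rw [this]
  exact Summable.mul_left _ hf

lemma PP_smul (c : ℝ) (f : ℕ → ℝ) : PP p (fun j => c * f j) = |c| ^ p * PP p f := by
  unfold PP
  rw [← tsum_mul_left]
  congr 1
  funext j
  rw [abs_mul, Real.mul_rpow (abs_nonneg _) (abs_nonneg _)]

lemma PP_nonneg (f : ℕ → ℝ) : 0 ≤ PP p f :=
  tsum_nonneg (fun _ => Real.rpow_nonneg (abs_nonneg _) _)

lemma PP_add (hp0 : 0 < p) (hp1 : p < 1) {f g : ℕ → ℝ} (hf : MemLpSeq p f)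
    (hg : MemLpSeq p g) : PP p (f + g) ≤ PP p f + PP p g := by
  unfold PP
  rw [← Summable.tsum_add hf hg]
  exact Summable.tsum_le_tsum (fun j => abs_rpow_add hp0 hp1 (f j) (g j))
    (mem_add hp0 hp1 hf hg) (Summable.add hf hg)

lemma PP_sum_le {f : ℕ → ℝ} (hf : MemLpSeq p f) (J : Finset ℕ) :
    ∑ j ∈ J, |f j| ^ p ≤ PP p f :=
  Summable.sum_le_tsum J (fun j _ => Real.rpow_nonneg (abs_nonneg _) _) hf

lemma PP_single_le {f : ℕ → ℝ} (hf : MemLpSeq p f) (j : ℕ) : |f j| ^ p ≤ PP p f := by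
  simpa using PP_sum_le hf {j}

lemma pNorm_rpow (hp0 : 0 < p) (f : ℕ → ℝ) : pNorm p f ^ p = PP p f := by
  change (PP p f ^ (1 / p)) ^ p = PP p f
  rw [← Real.rpow_mul (PP_nonneg f), one_div, inv_mul_cancel₀ hp0.ne', Real.rpow_one]

lemma pNorm_nonneg (f : ℕ → ℝ) : 0 ≤ pNorm p f := Real.rpow_nonneg (PP_nonneg f) _

lemma PP_le_of_pNorm_le (hp0 : 0 < p) {f g : ℕ → ℝ} {C : ℝ} (hC : 0 ≤ C)
    (h : pNorm p f ≤ C * pNorm p g) : PP p f ≤ C ^ p * PP p g := by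
  rw [← pNorm_rpow hp0, ← pNorm_rpow hp0, ← Real.mul_rpow hC (pNorm_nonneg g)]
  exact Real.rpow_le_rpow (pNorm_nonneg f) h hp0.le

lemma pNorm_le_of_PP_le (hp0 : 0 < p) {f g : ℕ → ℝ} {C : ℝ} (hC : 0 ≤ C)
    (h : PP p f ≤ C * PP p g) : pNorm p f ≤ C ^ (1 / p) * pNorm p g := by
  have : pNorm p f = PP p f ^ (1 / p) := rfl
  rw [this]
  have : pNorm p g = PP p g ^ (1 / p) := rfl
  rw [this, ← Real.mul_rpow hC (PP_nonneg g)]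
  exact Real.rpow_le_rpow (PP_nonneg f) h (by positivity)

variable {x : ℕ → ℕ → ℝ}

lemma mem_zero (hp0 : 0 < p) : MemLpSeq p (fun _ => 0) := by
  unfold MemLpSeq
  simp [Real.zero_rpow hp0.ne']

lemma lc_insert {D : Finset ℕ} {n : ℕ} (h : n ∉ D) (c : ℕ → ℝ) :
    lc x (insert n D) c = (fun j => c n * x n j) + lc x D c := by
  funext j
  simp [lc, Finset.sum_insert h]

lemma lc_empty (c : ℕ → ℝ) : lc x ∅ c = fun _ => 0 := by
  funext j
  simp [lc]

lemma lc_mem (hp0 : 0 < p) (hp1 : p < 1) (hx : ∀ n, MemLpSeq p (x n)) (D : Finset ℕ)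
    (c : ℕ → ℝ) : MemLpSeq p (lc x D c) := by
  induction D using Finset.induction_on with
  | empty => rw [lc_empty]; exact mem_zero hp0
  | insert n D hn ih =>
    rw [lc_insert hn]
    exact mem_add hp0 hp1 (mem_smul _ (hx n)) ih

lemma PP_zero (hp0 : 0 < p) : PP p (fun _ => 0) = 0 := by
  simp [PP, Real.zero_rpow hp0.ne']

lemma PP_lc_le (hp0 : 0 < p) (hp1 : p < 1) (hx : ∀ n, MemLpSeq p (x n)) (D : Finset ℕ)
    (c : ℕ → ℝ) : PP p (lc x D c) ≤ ∑ n ∈ D, |c n| ^ p * PP p (x n) := by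
  induction D using Finset.induction_on with
  | empty => rw [lc_empty, PP_zero hp0]; simp
  | insert n D hn ih =>
    rw [lc_insert hn, Finset.sum_insert hn, ← PP_smul]
    exact (PP_add hp0 hp1 (mem_smul _ (hx n)) (lc_mem hp0 hp1 hx D c)).trans (by gcongr)

lemma lc_add (D : Finset ℕ) (c d : ℕ → ℝ) :
    lc x D (fun n => c n + d n) = lc x D c + lc x D d := by
  funext j
  simp [lc, add_mul, Finset.sum_add_distrib]

lemma lc_smul (D : Finset ℕ) (r : ℝ) (c : ℕ → ℝ) :
    lc x D (fun n => r * c n) = fun j => r * lc x D c j := by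
  funext j
  simp [lc, Finset.mul_sum, mul_assoc]

lemma lc_congr {D : Finset ℕ} {c d : ℕ → ℝ} (h : ∀ n ∈ D, c n = d n) :
    lc x D c = lc x D d := by
  funext j
  exact Finset.sum_congr rfl (fun n hn => by rw [h n hn])

lemma lc_filter (D : Finset ℕ) (q : ℕ → Prop) [DecidablePred q] (c : ℕ → ℝ) :
    lc x D c = lc x (D.filter q) c + lc x (D.filter fun n => ¬ q n) c := by
  funext j
  simp [lc, Finset.sum_filter_add_sum_filter_not]

lemma lc_sdiff {D E : Finset ℕ} (h : E ⊆ D) (c : ℕ → ℝ) :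
    lc x D c = lc x E c + lc x (D \ E) c := by
  funext j
  simp only [lc, Pi.add_apply]
  rw [add_comm]
  exact (Finset.sum_sdiff h).symm

end basic

section core
variable {p : ℝ} {x : ℕ → ℕ → ℝ} {xs : ℕ → (ℕ → ℝ) → ℝ}

lemma xs_zero (hp0 : 0 < p) (hb : IsLpBasis p x xs) (m : ℕ) : xs m (fun _ => 0) = 0 := by
  have := hb.map_smul m 0 (fun _ => 0) (mem_zero hp0)
  simpa using this

lemma xs_lc (hp0 : 0 < p) (hp1 : p < 1) (hb : IsLpBasis p x xs) (m : ℕ) (D : Finset ℕ)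
    (c : ℕ → ℝ) : xs m (lc x D c) = if m ∈ D then c m else 0 := by
  induction D using Finset.induction_on with
  | empty => rw [lc_empty, xs_zero hp0 hb]; simp
  | insert n D hn ih =>
    rw [lc_insert hn, hb.map_add _ _ _ (mem_smul _ (hb.mem n)) (lc_mem hp0 hp1 hb.mem D c),
      hb.map_smul _ _ _ (hb.mem n), hb.biorth, ih]
    by_cases h : m = n
    · subst h; simp [hn]
    · simp [h]

/-- quasi-greedy in terms of `PP`. -/
def QGP (p : ℝ) (x : ℕ → ℕ → ℝ) (xs : ℕ → (ℕ → ℝ) → ℝ) (Q : ℝ) : Prop :=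
  ∀ f, MemLpSeq p f → ∀ A : Finset ℕ, GreedySet (fun n => xs n f) A →
    PP p (lc x A (fun n => xs n f)) ≤ Q * PP p f

lemma sub_signs (hp0 : 0 < p) (hp1 : p < 1) (hb : IsLpBasis p x xs) {Q : ℝ}
    (hQ : QGP p x xs Q) (D T : Finset ℕ) (hT : T ⊆ D) (e : ℕ → ℝ) (he : ∀ n ∈ D, |e n| = 1) :
    PP p (lc x T e) ≤ Q * PP p (lc x D e) := by
  have h := hQ (lc x D e) (lc_mem hp0 hp1 hb.mem D e) T (by
    intro n hn k hk
    simp only [xs_lc hp0 hp1 hb]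
    rw [if_pos (hT hn), he n (hT hn)]
    split_ifs with h
    · rw [he k h]
    · simp)
  rwa [lc_congr (d := e) (fun n hn => by rw [xs_lc hp0 hp1 hb, if_pos (hT hn)])] at h

lemma neg_lc (D : Finset ℕ) (e d : ℕ → ℝ) (h : ∀ n ∈ D, d n = - e n) :
    PP p (lc x D d) = PP p (lc x D e) := by
  rw [lc_congr (d := fun n => (-1) * e n) (fun n hn => by rw [h n hn]; ring), lc_smul, PP_smul]
  simp

lemma signs (hp0 : 0 < p) (hp1 : p < 1) (hb : IsLpBasis p x xs) {Q : ℝ}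
    (hQ : QGP p x xs Q) (D : Finset ℕ) (e d : ℕ → ℝ) (he : ∀ n ∈ D, |e n| = 1)
    (hd : ∀ n ∈ D, |d n| = 1) :
    PP p (lc x D d) ≤ 2 * Q * PP p (lc x D e) := by
  classical
  rw [lc_filter D (fun n => d n = e n) d]
  refine (PP_add hp0 hp1 (lc_mem hp0 hp1 hb.mem _ _) (lc_mem hp0 hp1 hb.mem _ _)).trans ?_
  have h1 : PP p (lc x (D.filter fun n => d n = e n) d) ≤ Q * PP p (lc x D e) := by
    rw [lc_congr (d := e) (fun n hn => (Finset.mem_filter.1 hn).2)]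
    exact sub_signs hp0 hp1 hb hQ D _ (Finset.filter_subset _ _) e he
  have h2 : PP p (lc x (D.filter fun n => ¬ d n = e n) d) ≤ Q * PP p (lc x D e) := by
    rw [neg_lc (e := e)]
    · exact sub_signs hp0 hp1 hb hQ D _ (Finset.filter_subset _ _) e he
    · intro n hn
      obtain ⟨hn, hne⟩ := Finset.mem_filter.1 hn
      have := abs_eq_abs.1 ((hd n hn).trans (he n hn).symm)
      tauto
  linarith

/-- signs that never vanish -/
noncomputable def sg (a : ℝ) : ℝ := if 0 ≤ a then 1 else -1

lemma abs_sg (a : ℝ) : |sg a| = 1 := by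
  unfold sg; split_ifs <;> simp

lemma sg_mul (a : ℝ) : sg a * a = |a| := by
  unfold sg; split_ifs with h
  · rw [abs_of_nonneg h, one_mul]
  · rw [abs_of_neg (not_le.1 h)]; ring

lemma mul_sg (a : ℝ) : |a| * sg a = a := by
  unfold sg; split_ifs with h
  · rw [abs_of_nonneg h, mul_one]
  · rw [abs_of_neg (not_le.1 h)]; ring

lemma bdd_coeff_aux (hp0 : 0 < p) (hp1 : p < 1) (hb : IsLpBasis p x xs) (D : Finset ℕ) (N : ℝ)
    (hN : ∀ d : ℕ → ℝ, (∀ n ∈ D, |d n| = 1) → PP p (lc x D d) ≤ N) (k : ℕ) :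
    ∀ b : ℕ → ℝ, (∀ n ∈ D, |b n| ≤ 1) →
      PP p (lc x D b) ≤ N / (2 ^ p - 1) + ((1 / 2 : ℝ) ^ p) ^ k * ∑ n ∈ D, PP p (x n) := by
  have h2 : (1 : ℝ) < 2 ^ p := Real.one_lt_rpow (by norm_num) hp0
  have h2i : (1 / 2 : ℝ) ^ p = 1 / 2 ^ p := by
    rw [Real.div_rpow (by norm_num) (by norm_num), Real.one_rpow]
  have hN0 : 0 ≤ N := (PP_nonneg _).trans (hN (fun _ => 1) (by simp))
  induction k with
  | zero =>
    intro b hb1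
    have : PP p (lc x D b) ≤ ∑ n ∈ D, PP p (x n) := by
      refine (PP_lc_le hp0 hp1 hb.mem D b).trans (Finset.sum_le_sum fun n hn => ?_)
      exact mul_le_of_le_one_left (PP_nonneg _)
        (Real.rpow_le_one (abs_nonneg _) (hb1 n hn) hp0.le)
    have h0 : 0 ≤ N / (2 ^ p - 1) := div_nonneg hN0 (by linarith)
    simpa using by linarith
  | succ k ih =>
    intro b hb1
    have hsplit : lc x D b = (fun j => (1 / 2) * lc x D (fun n => sg (b n)) j)
        + (fun j => (1 / 2) * lc x D (fun n => 2 * b n - sg (b n)) j) := by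
      rw [← lc_smul, ← lc_smul, ← lc_add]
      exact lc_congr (fun n hn => by ring)
    rw [hsplit]
    refine (PP_add hp0 hp1 (mem_smul _ (lc_mem hp0 hp1 hb.mem _ _))
      (mem_smul _ (lc_mem hp0 hp1 hb.mem _ _))).trans ?_
    rw [PP_smul, PP_smul]
    have e1 := hN (fun n => sg (b n)) (fun n _ => abs_sg _)
    have e2 := ih (fun n => 2 * b n - sg (b n)) (by
      intro n hn
      have := hb1 n hn
      rw [abs_le] at this ⊢
      unfold sg
      split_ifs with h <;> constructor <;> linarith)
    have e3 : |(1 / 2 : ℝ)| ^ p = 1 / 2 ^ p := by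
      rw [abs_of_pos (by norm_num), h2i]
    rw [pow_succ, h2i, e3]
    rw [h2i] at e2
    have hpos : (0 : ℝ) < 2 ^ p := by linarith
    calc 1 / 2 ^ p * PP p (lc x D fun n => sg (b n))
          + 1 / 2 ^ p * PP p (lc x D fun n => 2 * b n - sg (b n))
        ≤ 1 / 2 ^ p * N + 1 / 2 ^ p * (N / (2 ^ p - 1) +
            (1 / 2 ^ p) ^ k * ∑ n ∈ D, PP p (x n)) := by gcongr
      _ = _ := by
        have : (2 : ℝ) ^ p - 1 ≠ 0 := by linarith
        field_simp
        ring

lemma bdd_coeff (hp0 : 0 < p) (hp1 : p < 1) (hb : IsLpBasis p x xs) {Q : ℝ}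
    (hQ : QGP p x xs Q) (D : Finset ℕ) (e b : ℕ → ℝ) (he : ∀ n ∈ D, |e n| = 1)
    (hb1 : ∀ n ∈ D, |b n| ≤ 1) :
    PP p (lc x D b) ≤ (2 * Q / (2 ^ p - 1)) * PP p (lc x D e) := by
  have h := bdd_coeff_aux hp0 hp1 hb D (2 * Q * PP p (lc x D e))
    (fun d hd => signs hp0 hp1 hb hQ D e d he hd)
  have hlim : Filter.Tendsto (fun k : ℕ => 2 * Q * PP p (lc x D e) / (2 ^ p - 1)
      + ((1 / 2 : ℝ) ^ p) ^ k * ∑ n ∈ D, PP p (x n)) Filter.atTop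
      (nhds (2 * Q * PP p (lc x D e) / (2 ^ p - 1) + 0 * ∑ n ∈ D, PP p (x n))) := by
    refine Filter.Tendsto.const_add _ (Filter.Tendsto.mul_const _ ?_)
    exact tendsto_pow_atTop_nhds_zero_of_lt_one (by positivity)
      (Real.rpow_lt_one (by norm_num) (by norm_num) hp0)
  have := ge_of_tendsto' hlim (fun k => h k b hb1)
  rw [zero_mul, add_zero] at this
  calc _ ≤ _ := this
    _ = _ := by ring

lemma near_const (hp0 : 0 < p) (hp1 : p < 1) (hb : IsLpBasis p x xs) {K s : ℝ} (hs : 0 < s)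
    (hK0 : 0 ≤ K)
    (hK : ∀ (D : Finset ℕ) (e b : ℕ → ℝ), (∀ n ∈ D, |e n| = 1) → (∀ n ∈ D, |b n| ≤ 1) →
      PP p (lc x D b) ≤ K * PP p (lc x D e))
    (hsK : K * s ^ p ≤ 1 / 2) (D : Finset ℕ) (a b : ℕ → ℝ) (l : ℝ) (hl : 0 < l)
    (ha : ∀ n ∈ D, l ≤ |a n| ∧ |a n| ≤ (1 + s) * l) (hb1 : ∀ n ∈ D, |b n| ≤ 1) :
    l ^ p * PP p (lc x D b) ≤ 2 * K * PP p (lc x D a) := by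
  set e : ℕ → ℝ := fun n => sg (a n) with he
  have he1 : ∀ n ∈ D, |e n| = 1 := fun n _ => abs_sg _
  set w : ℕ → ℝ := fun n => (l * e n - a n) / (s * l) with hw
  have hsl : 0 < s * l := by positivity
  have hw1 : ∀ n ∈ D, |w n| ≤ 1 := by
    intro n hn
    obtain ⟨h1, h2⟩ := ha n hn
    rw [hw]
    simp only
    rw [abs_div, abs_of_pos hsl, div_le_one hsl]
    have : l * e n - a n = (l - |a n|) * e n := by
      rw [he]; simp only; rw [sub_mul, mul_sg]
    rw [this, abs_mul, he1 n hn, mul_one, abs_le]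
    constructor <;> nlinarith
  have hsplit : (fun j => l * lc x D e j) = lc x D a + (fun j => (s * l) * lc x D w j) := by
    rw [← lc_smul, ← lc_smul, ← lc_add]
    refine lc_congr (fun n hn => ?_)
    rw [hw]; field_simp; ring
  have h1 := PP_add hp0 hp1 (lc_mem hp0 hp1 hb.mem D a)
    (mem_smul (s * l) (lc_mem hp0 hp1 hb.mem D w))
  rw [← hsplit, PP_smul, PP_smul, abs_of_pos hl, abs_of_pos hsl,
    Real.mul_rpow hs.le hl.le] at h1
  have h2 := hK D e w he1 hw1
  have h3 := hK D e b he1 hb1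
  have hE := PP_nonneg (p := p) (lc x D e)
  have hlp : 0 < l ^ p := Real.rpow_pos_of_pos hl _
  have hsp : 0 < s ^ p := Real.rpow_pos_of_pos hs _
  have h4 : s ^ p * l ^ p * PP p (lc x D w) ≤ 1 / 2 * (l ^ p * PP p (lc x D e)) := by
    calc s ^ p * l ^ p * PP p (lc x D w) ≤ s ^ p * l ^ p * (K * PP p (lc x D e)) := by gcongr
      _ = (K * s ^ p) * (l ^ p * PP p (lc x D e)) := by ring
      _ ≤ _ := by gcongr
  have h5 : l ^ p * PP p (lc x D e) ≤ 2 * PP p (lc x D a) := by linarith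
  calc l ^ p * PP p (lc x D b) ≤ l ^ p * (K * PP p (lc x D e)) := by gcongr
    _ = K * (l ^ p * PP p (lc x D e)) := by ring
    _ ≤ K * (2 * PP p (lc x D a)) := by gcongr
    _ = _ := by ring

lemma truncation_aux (hp0 : 0 < p) (hp1 : p < 1) (hb : IsLpBasis p x xs) {K s Q : ℝ}
    (hs : 0 < s) (hK0 : 0 ≤ K) (hQ0 : 0 ≤ Q) (hQ : QGP p x xs Q)
    (hnc : ∀ (D : Finset ℕ) (a b : ℕ → ℝ) (l : ℝ), 0 < l →
      (∀ n ∈ D, l ≤ |a n| ∧ |a n| ≤ (1 + s) * l) → (∀ n ∈ D, |b n| ≤ 1) →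
      l ^ p * PP p (lc x D b) ≤ 2 * K * PP p (lc x D a))
    (f : ℕ → ℝ) (hf : MemLpSeq p f) (b : ℕ → ℝ) (hb1 : ∀ n, |b n| ≤ 1) (N : ℕ) :
    ∀ (t : ℝ) (D : Finset ℕ), 0 < t → GreedySet (fun n => xs n f) D →
      (∀ n ∈ D, t ≤ |xs n f| ∧ |xs n f| < (1 + s) ^ N * t) →
      t ^ p * PP p (lc x D b) ≤ 4 * K * Q / (1 - ((1 + s) ^ p)⁻¹) * PP p f := by
  have hsp : 1 < (1 + s) ^ p := Real.one_lt_rpow (by linarith) hp0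
  have hsi : ((1 + s) ^ p)⁻¹ < 1 := inv_lt_one_of_one_lt₀ hsp
  have hPf := PP_nonneg (p := p) f
  induction N with
  | zero =>
    intro t D ht hD h
    have : D = ∅ := by
      rw [Finset.eq_empty_iff_forall_notMem]
      intro n hn
      have := h n hn
      rw [pow_zero, one_mul] at this
      linarith
    rw [this, lc_empty, PP_zero hp0, mul_zero]
    have : 0 < 1 - ((1 + s) ^ p)⁻¹ := by linarith
    positivity
  | succ N ih =>
    intro t D ht hD h
    classical
    set q : ℕ → Prop := fun n => (1 + s) * t ≤ |xs n f| with hq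
    have hG : GreedySet (fun n => xs n f) (D.filter q) := by
      intro n hn k hk
      obtain ⟨hn1, hn2⟩ := Finset.mem_filter.1 hn
      by_cases hkD : k ∈ D
      · have hk' : ¬ q k := fun hh => hk (Finset.mem_filter.2 ⟨hkD, hh⟩)
        exact (not_le.1 hk').le.trans hn2
      · exact hD n hn1 k hkD
    have h1 := ih ((1 + s) * t) (D.filter q) (by positivity) hG (by
      intro n hn
      obtain ⟨hn1, hn2⟩ := Finset.mem_filter.1 hn
      refine ⟨hn2, (h n hn1).2.trans_eq ?_⟩
      ring)
    have h2 := hnc (D.filter fun n => ¬ q n) (fun n => xs n f) b t ht (by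
      intro n hn
      obtain ⟨hn1, hn2⟩ := Finset.mem_filter.1 hn
      exact ⟨(h n hn1).1, (not_le.1 hn2).le⟩) (fun n _ => hb1 n)
    have h3 : PP p (lc x (D.filter fun n => ¬ q n) (fun n => xs n f)) ≤ 2 * Q * PP p f := by
      have e : lc x (D.filter fun n => ¬ q n) (fun n => xs n f) =
          lc x D (fun n => xs n f) + fun j => (-1) * lc x (D.filter q) (fun n => xs n f) j := by
        rw [lc_filter D q]
        funext j
        simp
      rw [e]
      refine (PP_add hp0 hp1 (lc_mem hp0 hp1 hb.mem _ _)
        (mem_smul _ (lc_mem hp0 hp1 hb.mem _ _))).trans ?_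
      rw [PP_smul]
      have := hQ f hf D hD
      have := hQ f hf _ hG
      simp only [abs_neg, abs_one, Real.one_rpow, one_mul]
      linarith
    have h4 : PP p (lc x D b) ≤ PP p (lc x (D.filter q) b)
        + PP p (lc x (D.filter fun n => ¬ q n) b) := by
      rw [lc_filter D q]
      exact PP_add hp0 hp1 (lc_mem hp0 hp1 hb.mem _ _) (lc_mem hp0 hp1 hb.mem _ _)
    have htp : 0 < t ^ p := Real.rpow_pos_of_pos ht _
    rw [Real.mul_rpow (by linarith) ht.le] at h1
    set S := (1 + s) ^ p with hS
    set R := 4 * K * Q / (1 - S⁻¹) with hR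
    have hS0 : 0 < S := by linarith
    have h5 : t ^ p * PP p (lc x (D.filter q) b) ≤ S⁻¹ * (R * PP p f) := by
      rw [← div_eq_inv_mul, le_div_iff₀ hS0]
      linarith
    have h6 : t ^ p * PP p (lc x (D.filter fun n => ¬ q n) b) ≤ 4 * K * Q * PP p f := by
      calc _ ≤ _ := h2
        _ ≤ 2 * K * (2 * Q * PP p f) := by gcongr
        _ = _ := by ring
    have h7 : 4 * K * Q = R * (1 - S⁻¹) := by
      rw [hR, div_mul_cancel₀]; linarith
    calc t ^ p * PP p (lc x D b) ≤ t ^ p * (PP p (lc x (D.filter q) b)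
        + PP p (lc x (D.filter fun n => ¬ q n) b)) := by gcongr
      _ ≤ S⁻¹ * (R * PP p f) + 4 * K * Q * PP p f := by linarith
      _ = R * PP p f := by rw [h7]; ring

lemma truncation (hp0 : 0 < p) (hp1 : p < 1) (hb : IsLpBasis p x xs) {Q : ℝ} (hQ0 : 0 ≤ Q)
    (hQ : QGP p x xs Q) : ∃ K ≥ 0, ∀ f, MemLpSeq p f → ∀ b : ℕ → ℝ, (∀ n, |b n| ≤ 1) →
      ∀ (t : ℝ) (D : Finset ℕ), 0 < t → GreedySet (fun n => xs n f) D →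
      (∀ n ∈ D, t ≤ |xs n f|) → t ^ p * PP p (lc x D b) ≤ K * PP p f := by
  have h2 : (1 : ℝ) < 2 ^ p := Real.one_lt_rpow (by norm_num) hp0
  set K1 := 2 * Q / (2 ^ p - 1) with hK1
  have hK1' : 0 ≤ K1 := div_nonneg (by linarith) (by linarith)
  obtain ⟨s, hs, hsK⟩ : ∃ s > 0, K1 * s ^ p ≤ 1 / 2 := by
    refine ⟨(1 / (2 * (K1 + 1))) ^ (1 / p), by positivity, ?_⟩
    rw [← Real.rpow_mul (by positivity), one_div, one_div, inv_mul_cancel₀ hp0.ne', Real.rpow_one,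
      ← div_eq_mul_inv, div_le_iff₀ (by positivity)]
    linarith
  have hsp : 1 < (1 + s) ^ p := Real.one_lt_rpow (by linarith) hp0
  have hsi : ((1 + s) ^ p)⁻¹ < 1 := inv_lt_one_of_one_lt₀ hsp
  refine ⟨4 * K1 * Q / (1 - ((1 + s) ^ p)⁻¹), div_nonneg (by positivity) (by linarith), ?_⟩
  intro f hf b hb1 t D ht hD hDt
  obtain ⟨N, hN⟩ : ∃ N : ℕ, (∑ n ∈ D, |xs n f|) / t < (1 + s) ^ N :=
    pow_unbounded_of_one_lt _ (by linarith)
  rw [div_lt_iff₀ ht] at hN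
  refine truncation_aux hp0 hp1 hb hs hK1' hQ0 hQ
    (fun D a b l hl ha hb1 => near_const hp0 hp1 hb hs hK1'
      (fun D e b he hb1 => bdd_coeff hp0 hp1 hb hQ D e b he hb1) hsK D a b l hl ha hb1)
    f hf b hb1 N t D ht hD (fun n hn => ⟨hDt n hn, lt_of_le_of_lt ?_ hN⟩)
  exact Finset.single_le_sum (f := fun n => |xs n f|) (fun _ _ => abs_nonneg _) hn

lemma coeff_finite (hp0 : 0 < p) (hp1 : p < 1) (hb : IsLpBasis p x xs) (f : ℕ → ℝ)
    (hf : MemLpSeq p f) (η : ℝ) (hη : 0 < η) : ∃ G : Finset ℕ, ∀ n, n ∈ G ↔ η ≤ |xs n f| := by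
  obtain ⟨B, hB⟩ := hb.bdd
  obtain ⟨A, c, hA⟩ := hb.dense f hf (η / (|B| + 1)) (by positivity)
  have hfin : {n | η ≤ |xs n f|}.Finite := by
    refine A.finite_toSet.subset ?_
    intro n hn
    by_contra hnA
    have hnA : n ∉ A := hnA
    have hm : MemLpSeq p (fun j => (-1) * lc x A c j) := mem_smul _ (lc_mem hp0 hp1 hb.mem A c)
    have e : (fun j => f j - ∑ n ∈ A, c n * x n j) = f + fun j => (-1) * lc x A c j := by
      funext j
      simp [lc, sub_eq_add_neg]
    rw [e] at hA
    have h1 := hB n _ (mem_add hp0 hp1 hf hm)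
    rw [hb.map_add _ _ _ hf hm, hb.map_smul _ _ _ (lc_mem hp0 hp1 hb.mem A c),
      xs_lc hp0 hp1 hb, if_neg hnA, mul_zero, add_zero] at h1
    rw [lt_div_iff₀ (by positivity)] at hA
    have hP := pNorm_nonneg (p := p) (f + fun j => (-1) * lc x A c j)
    have hn : η ≤ |xs n f| := hn
    nlinarith [le_abs_self B]
  exact ⟨hfin.toFinset, fun n => by simp⟩

/-- unit vector -/
noncomputable def ev (j : ℕ) : ℕ → ℝ := fun i => if i = j then 1 else 0

lemma ev_mem (hp0 : 0 < p) (j : ℕ) : MemLpSeq p (ev j) := by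
  refine summable_of_ne_finset_zero (s := {j}) ?_
  intro i hi
  have : i ≠ j := by simpa using hi
  simp [ev, this, Real.zero_rpow hp0.ne']

lemma ev_PP (hp0 : 0 < p) (j : ℕ) : PP p (ev j) = 1 := by
  unfold PP
  rw [tsum_eq_single j]
  · simp [ev]
  · intro i hi
    simp [ev, hi, Real.zero_rpow hp0.ne']

lemma PP_pNorm_one (f : ℕ → ℝ) (h : PP p f = 1) : pNorm p f = 1 := by
  change PP p f ^ (1 / p) = 1
  rw [h, Real.one_rpow]

lemma fiber_bound (hp0 : 0 < p) (hp1 : p < 1) (hb : IsLpBasis p x xs) {Q : ℝ} (hQ0 : 0 ≤ Q)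
    (hQ : QGP p x xs Q) (δ η : ℝ) (hδ : 0 < δ) (hη : 0 < η) :
    ∃ M : ℕ, ∀ (j : ℕ) (H : Finset ℕ), (∀ n ∈ H, δ ≤ |x n j| ∧ η ≤ |xs n (ev j)|) →
      H.card ≤ M := by
  obtain ⟨K, hK0, hK⟩ := truncation hp0 hp1 hb hQ0 hQ
  obtain ⟨M, hM⟩ := exists_nat_ge ((K / η ^ p) ^ (1 / p) / δ)
  refine ⟨M, fun j H hH => ?_⟩
  classical
  obtain ⟨G, hG⟩ := coeff_finite hp0 hp1 hb (ev j) (ev_mem hp0 j) η hη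
  have hHG : H ⊆ G := fun n hn => (hG n).2 (hH n hn).2
  set b : ℕ → ℝ := fun n => if n ∈ H then sg (x n j) else 0 with hbdef
  have h1 := hK (ev j) (ev_mem hp0 j) b (by
    intro n
    rw [hbdef]; simp only
    split_ifs
    · rw [abs_sg]
    · simp) η G hη (by
      intro n hn k hk
      rw [hG] at hn hk
      exact (not_le.1 hk).le.trans hn) (fun n hn => (hG n).1 hn)
  rw [ev_PP hp0, mul_one] at h1
  have h2 := PP_single_le (lc_mem hp0 hp1 hb.mem G b) j
  have h3 : lc x G b j = ∑ n ∈ H, |x n j| := by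
    unfold lc
    rw [← Finset.sum_subset hHG]
    · refine Finset.sum_congr rfl fun n hn => ?_
      rw [hbdef]; simp only [if_pos hn]
      exact sg_mul _
    · intro n _ hn
      rw [hbdef]; simp [hn]
  have h4 : (H.card : ℝ) * δ ≤ |lc x G b j| := by
    rw [h3]
    refine le_trans ?_ (le_abs_self _)
    rw [← nsmul_eq_mul]
    exact Finset.card_nsmul_le_sum _ _ _ (fun n hn => (hH n hn).1)
  have hηp : 0 < η ^ p := Real.rpow_pos_of_pos hη _
  have h5 : |lc x G b j| ^ p ≤ K / η ^ p := by
    rw [le_div_iff₀ hηp]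
    calc _ ≤ PP p (lc x G b) * η ^ p := by gcongr
      _ ≤ K := by linarith
  have h6 : |lc x G b j| ≤ (K / η ^ p) ^ (1 / p) := by
    have := Real.rpow_le_rpow (Real.rpow_nonneg (abs_nonneg _) _) h5 (by positivity : 0 ≤ 1 / p)
    rwa [← Real.rpow_mul (abs_nonneg _), mul_one_div_cancel hp0.ne', Real.rpow_one] at this
  have h7 : (H.card : ℝ) ≤ M := by
    refine le_trans ?_ hM
    rw [le_div_iff₀ hδ]
    exact h4.trans h6
  exact_mod_cast h7

lemma xs_trunc (hp0 : 0 < p) (hp1 : p < 1) (hb : IsLpBasis p x xs) (n : ℕ) (f : ℕ → ℝ)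
    (N : ℕ) : xs n (lc ev (Finset.range N) f) = ∑ j ∈ Finset.range N, f j * xs n (ev j) := by
  induction N with
  | zero =>
    rw [Finset.range_zero, lc_empty, xs_zero hp0 hb]; simp
  | succ N ih =>
    rw [Finset.sum_range_succ, ← ih, Finset.range_add_one, lc_insert (by simp),
      hb.map_add _ _ _ (mem_smul _ (ev_mem hp0 N)) (lc_mem hp0 hp1 (ev_mem hp0) _ f),
      hb.map_smul _ _ _ (ev_mem hp0 N)]
    ring

lemma lc_ev_apply (f : ℕ → ℝ) (N i : ℕ) :
    lc ev (Finset.range N) f i = if i < N then f i else 0 := by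
  simp [lc, ev]

lemma exists_coord (hp0 : 0 < p) (hp1 : p < 1) (hb : IsLpBasis p x xs) :
    ∃ δ > 0, ∃ η > 0, ∀ n, ∃ j, δ ≤ |x n j| ∧ η ≤ |xs n (ev j)| := by
  obtain ⟨B0, hB0⟩ := hb.bdd
  obtain ⟨C0, hC0⟩ := hb.norm_ub
  set B := |B0| + 1 with hB
  set X := |C0| + 1 with hX
  have hB1 : 1 ≤ B := by rw [hB]; linarith [abs_nonneg B0]
  have hX1 : 1 ≤ X := by rw [hX]; linarith [abs_nonneg C0]
  have hBb : ∀ n f, MemLpSeq p f → |xs n f| ≤ B * pNorm p f := fun n f hf =>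
    (hB0 n f hf).trans (mul_le_mul_of_nonneg_right (by rw [hB]; linarith [le_abs_self B0])
      (pNorm_nonneg f))
  have hXx : ∀ n, PP p (x n) ≤ X := by
    intro n
    rw [← pNorm_rpow hp0]
    calc pNorm p (x n) ^ p ≤ X ^ p :=
          Real.rpow_le_rpow (pNorm_nonneg _)
            ((hC0 n).trans (by rw [hX]; linarith [le_abs_self C0])) hp0.le
      _ ≤ X ^ (1 : ℝ) := Real.rpow_le_rpow_of_exponent_le hX1 hp1.le
      _ = X := Real.rpow_one _
  have hxX : ∀ n j, |x n j| ≤ X := by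
    intro n j
    have h1 := PP_single_le (hb.mem n) j
    rw [← pNorm_rpow hp0] at h1
    have h2 := (Real.rpow_le_rpow_iff (abs_nonneg _) (pNorm_nonneg _) hp0).1 h1
    exact h2.trans ((hC0 n).trans (by rw [hX]; linarith [le_abs_self C0]))
  have hq : 0 < 1 - p := by linarith
  set δ : ℝ := (1 / (4 * B * X)) ^ (1 / (1 - p)) with hδ
  have hBX : 0 < B * X := by positivity
  have hδ0 : 0 < δ := by positivity
  have hδq : δ ^ (1 - p) = 1 / (4 * B * X) := by
    rw [hδ, ← Real.rpow_mul (by positivity), one_div_mul_cancel hq.ne', Real.rpow_one]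
  set η : ℝ := 1 / (4 * X * X) with hη
  refine ⟨δ, hδ0, η, by positivity, fun n => ?_⟩
  by_contra hcon
  push Not at hcon
  have hterm : ∀ j, |x n j * xs n (ev j)| ≤ |x n j| ^ p * (1 / (4 * X)) := by
    intro j
    have hsp : |x n j| = |x n j| ^ p * |x n j| ^ (1 - p) := by
      rcases (abs_nonneg (x n j)).eq_or_lt with h0 | h0
      · rw [← h0, Real.zero_rpow hp0.ne', zero_mul]
      · rw [← Real.rpow_add h0]; simp
    have hxp : 0 ≤ |x n j| ^ p := Real.rpow_nonneg (abs_nonneg _) _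
    have hxq : 0 ≤ |x n j| ^ (1 - p) := Real.rpow_nonneg (abs_nonneg _) _
    have key : |x n j| ^ (1 - p) * |xs n (ev j)| ≤ 1 / (4 * X) := by
      by_cases hj : δ ≤ |x n j|
      · have h1 := (hcon j hj).le
        have h2 : |x n j| ^ (1 - p) ≤ X := by
          calc |x n j| ^ (1 - p) ≤ X ^ (1 - p) :=
                Real.rpow_le_rpow (abs_nonneg _) (hxX n j) hq.le
            _ ≤ X ^ (1 : ℝ) := Real.rpow_le_rpow_of_exponent_le hX1 (by linarith)
            _ = X := Real.rpow_one _
        calc _ ≤ X * η := by gcongr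
          _ = 1 / (4 * X) := by rw [hη]; field_simp
      · have h1 : |x n j| ^ (1 - p) ≤ δ ^ (1 - p) :=
          Real.rpow_le_rpow (abs_nonneg _) (not_le.1 hj).le hq.le
        have h2 := hBb n (ev j) (ev_mem hp0 j)
        rw [PP_pNorm_one _ (ev_PP hp0 j), mul_one] at h2
        rw [hδq] at h1
        calc _ ≤ 1 / (4 * B * X) * B := by gcongr
          _ = 1 / (4 * X) := by field_simp
    rw [abs_mul]
    calc |x n j| * |xs n (ev j)| = |x n j| ^ p * (|x n j| ^ (1 - p) * |xs n (ev j)|) := by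
          rw [← mul_assoc, ← hsp]
      _ ≤ _ := by gcongr
  -- tail
  have htail : Filter.Tendsto (fun N => ∑' k, |x n (k + N)| ^ p) Filter.atTop (nhds 0) :=
    tendsto_sum_nat_add (fun j => |x n j| ^ p)
  have hev := htail.eventually (gt_mem_nhds (show (0 : ℝ) < (1 / (2 * B)) ^ p by positivity))
  obtain ⟨N, hN⟩ := hev.exists
  set r : ℕ → ℝ := fun j => if j < N then 0 else x n j with hr
  have hrm : MemLpSeq p r := by
    refine Summable.of_nonneg_of_le (fun _ => Real.rpow_nonneg (abs_nonneg _) _) ?_ (hb.mem n)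
    intro j
    rw [hr]; simp only
    split_ifs
    · rw [abs_zero, Real.zero_rpow hp0.ne']; exact Real.rpow_nonneg (abs_nonneg _) _
    · exact le_rfl
  have hrP : PP p r = ∑' k, |x n (k + N)| ^ p := by
    unfold PP
    rw [← Summable.sum_add_tsum_nat_add N hrm]
    have h0 : ∑ i ∈ Finset.range N, |r i| ^ p = 0 := by
      refine Finset.sum_eq_zero fun i hi => ?_
      rw [hr]; simp only
      rw [if_pos (Finset.mem_range.1 hi), abs_zero, Real.zero_rpow hp0.ne']
    rw [h0, zero_add]
    refine tsum_congr fun k => ?_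
    rw [hr]; simp
  have hdec : x n = lc ev (Finset.range N) (x n) + r := by
    funext i
    rw [Pi.add_apply, lc_ev_apply, hr]
    simp only
    split_ifs <;> simp
  have hlm : MemLpSeq p (lc ev (Finset.range N) (x n)) := lc_mem hp0 hp1 (ev_mem hp0) _ _
  have hone : xs n (x n) = 1 := by rw [hb.biorth]; simp
  have h1 : (1 : ℝ) = ∑ j ∈ Finset.range N, x n j * xs n (ev j) + xs n r := by
    rw [← xs_trunc hp0 hp1 hb, ← hb.map_add _ _ _ hlm hrm, ← hdec, hone]
  have h2 : |xs n r| < 1 / 2 := by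
    have hlt : pNorm p r < 1 / (2 * B) := by
      rw [← hrP, ← pNorm_rpow hp0] at hN
      exact (Real.rpow_lt_rpow_iff (pNorm_nonneg _) (by positivity) hp0).1 hN
    calc |xs n r| ≤ B * pNorm p r := hBb n r hrm
      _ < B * (1 / (2 * B)) := by gcongr
      _ = 1 / 2 := by field_simp
  have h3 : |∑ j ∈ Finset.range N, x n j * xs n (ev j)| ≤ 1 / 4 := by
    calc _ ≤ ∑ j ∈ Finset.range N, |x n j * xs n (ev j)| := Finset.abs_sum_le_sum_abs _ _
      _ ≤ ∑ j ∈ Finset.range N, |x n j| ^ p * (1 / (4 * X)) :=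
          Finset.sum_le_sum fun j _ => hterm j
      _ = (∑ j ∈ Finset.range N, |x n j| ^ p) * (1 / (4 * X)) := by rw [Finset.sum_mul]
      _ ≤ X * (1 / (4 * X)) := by
          gcongr
          exact (PP_sum_le (hb.mem n) _).trans (hXx n)
      _ = 1 / 4 := by field_simp
  have h4 := le_abs_self (∑ j ∈ Finset.range N, x n j * xs n (ev j))
  have h5 := le_abs_self (xs n r)
  linarith

lemma democracy (hp0 : 0 < p) (hp1 : p < 1) (hb : IsLpBasis p x xs) {Q : ℝ} (hQ0 : 0 ≤ Q)
    (hQ : QGP p x xs Q) : ∃ K ≥ 0, ∀ (D : Finset ℕ) (R : ℝ),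
      (∀ T ⊆ D, PP p (lc x T (fun _ => 1)) ≤ R) → (D.card : ℝ) ≤ K * R := by
  obtain ⟨δ, hδ, η, hη, hj⟩ := exists_coord hp0 hp1 hb
  choose J hJ using hj
  obtain ⟨M, hM⟩ := fiber_bound hp0 hp1 hb hQ0 hQ δ η hδ hη
  have hδp : 0 < δ ^ p := Real.rpow_pos_of_pos hδ _
  refine ⟨M * (2 / δ ^ p), by positivity, fun D R hR => ?_⟩
  classical
  have hcard : D.card ≤ M * (D.image J).card := by
    refine Finset.card_le_mul_card_image D M fun j _ => hM j _ fun n hn => ?_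
    obtain ⟨_, rfl⟩ := Finset.mem_filter.1 hn
    exact hJ n
  -- averaging
  have havg : ∀ j ∈ D.image J, (2 : ℝ) ^ D.card * δ ^ p ≤
      2 * ∑ T ∈ D.powerset, |lc x T (fun _ => 1) j| ^ p := by
    intro j hj
    obtain ⟨n, hn, rfl⟩ := Finset.mem_image.1 hj
    obtain ⟨D', hD', rfl⟩ : ∃ D', n ∉ D' ∧ D = insert n D' :=
      ⟨D.erase n, by simp, (Finset.insert_erase hn).symm⟩
    rw [Finset.sum_powerset_insert hD', ← Finset.sum_add_distrib, Finset.card_insert_of_notMem hD']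
    have : (2 : ℝ) ^ D'.card * δ ^ p ≤ ∑ T ∈ D'.powerset, (|lc x T (fun _ => 1) (J n)| ^ p
        + |lc x (insert n T) (fun _ => 1) (J n)| ^ p) := by
      have hc : (2 : ℝ) ^ D'.card * δ ^ p = D'.powerset.card • δ ^ p := by
        rw [Finset.card_powerset, nsmul_eq_mul]; push_cast; ring
      rw [hc]
      refine Finset.card_nsmul_le_sum _ _ _ fun T hT => ?_
      have hnT : n ∉ T := fun h => hD' (Finset.mem_powerset.1 hT h)
      rw [lc_insert hnT]
      simp only [Pi.add_apply, one_mul]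
      set a := lc x T (fun _ => 1) (J n)
      have h1 := abs_rpow_add hp0 hp1 (-a) (x n (J n) + a)
      rw [abs_neg, neg_add_cancel_comm_assoc] at h1
      exact (Real.rpow_le_rpow hδ.le (hJ n).1 hp0.le).trans h1
    rw [pow_succ]
    linarith
  have hsum : ((D.image J).card : ℝ) * (2 ^ D.card * δ ^ p) ≤ 2 * (2 ^ D.card * R) := by
    calc ((D.image J).card : ℝ) * (2 ^ D.card * δ ^ p)
        = (D.image J).card • (2 ^ D.card * δ ^ p) := by rw [nsmul_eq_mul]
      _ ≤ ∑ j ∈ D.image J, 2 * ∑ T ∈ D.powerset, |lc x T (fun _ => 1) j| ^ p :=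
          Finset.card_nsmul_le_sum _ _ _ havg
      _ = 2 * ∑ T ∈ D.powerset, ∑ j ∈ D.image J, |lc x T (fun _ => 1) j| ^ p := by
          rw [← Finset.mul_sum, Finset.sum_comm]
      _ ≤ 2 * ∑ T ∈ D.powerset, R := by
          gcongr with T hT
          exact (PP_sum_le (lc_mem hp0 hp1 hb.mem _ _) _).trans
            (hR T (Finset.mem_powerset.1 hT))
      _ = _ := by rw [Finset.sum_const, Finset.card_powerset, nsmul_eq_mul]; push_cast; ring
  have h2 : (0 : ℝ) < 2 ^ D.card := by positivity
  have hJc : ((D.image J).card : ℝ) ≤ 2 / δ ^ p * R := by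
    rw [div_mul_eq_mul_div, le_div_iff₀ hδp]
    have : (2 : ℝ) ^ D.card * ((D.image J).card * δ ^ p) ≤ 2 ^ D.card * (2 * R) := by linarith
    exact le_of_mul_le_mul_left this h2
  calc (D.card : ℝ) ≤ M * (D.image J).card := by exact_mod_cast hcard
    _ ≤ M * (2 / δ ^ p * R) := by gcongr
    _ = _ := by ring

lemma star (hp0 : 0 < p) (hp1 : p < 1) (hb : IsLpBasis p x xs) {Q : ℝ} (hQ0 : 0 ≤ Q)
    (hQ : QGP p x xs Q) : ∃ K ≥ 0, ∀ g, MemLpSeq p g → ∀ (t : ℝ) (D : Finset ℕ), 0 ≤ t →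
      GreedySet (fun n => xs n g) D → (∀ n ∈ D, t ≤ |xs n g|) →
      t ^ p * D.card ≤ K * PP p g := by
  obtain ⟨K2, hK2, h2⟩ := truncation hp0 hp1 hb hQ0 hQ
  obtain ⟨K3, hK3, h3⟩ := democracy hp0 hp1 hb hQ0 hQ
  refine ⟨K3 * K2, by positivity, fun g hg t D ht hD hDt => ?_⟩
  classical
  have hPg := PP_nonneg (p := p) g
  rcases ht.eq_or_lt with h0 | h0
  · rw [← h0, Real.zero_rpow hp0.ne', zero_mul]; positivity
  have htp : 0 < t ^ p := Real.rpow_pos_of_pos h0 _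
  have := h3 D (K2 * PP p g / t ^ p) (by
    intro T hT
    rw [le_div_iff₀ htp]
    have := h2 g hg (fun n => if n ∈ T then 1 else 0) (by
      intro n; split_ifs <;> simp) t D h0 hD hDt
    have e : lc x D (fun n => if n ∈ T then 1 else 0) = lc x T (fun _ => 1) := by
      funext j
      unfold lc
      rw [← Finset.sum_subset hT]
      · exact Finset.sum_congr rfl fun n hn => by simp [hn]
      · intro n _ hn; simp [hn]
    rw [e] at this
    linarith)
  calc t ^ p * (D.card : ℝ) ≤ t ^ p * (K3 * (K2 * PP p g / t ^ p)) := by gcongr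
    _ = _ := by field_simp

end core

/-- Quasi-greedy bases of `ℓ_p`, `0<p<1`, are almost greedy: the error of the
greedy algorithm is uniformly comparable to the error of the best coordinate
projection of the same cardinality. -/
theorem stmt8 (p : ℝ) (hp0 : 0 < p) (hp1 : p < 1)
    (x : ℕ → ℕ → ℝ) (xs : ℕ → (ℕ → ℝ) → ℝ)
    (hbasis : IsLpBasis p x xs) (hqg : QuasiGreedy p x xs) :
    ∃ C ≥ (1 : ℝ), ∀ f, MemLpSeq p f → ∀ A : Finset ℕ, 1 ≤ A.card →
      GreedySet (fun n => xs n f) A →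
      ∀ B : Finset ℕ, B.card = A.card →
        pNorm p (fun j => f j - ∑ n ∈ A, xs n f * x n j)
          ≤ C * pNorm p (fun j => f j - ∑ n ∈ B, xs n f * x n j) := by
  obtain ⟨C, hC1, hC⟩ := hqg
  have hC0 : 0 ≤ C := by linarith
  set Q := C ^ p with hQdef
  have hQ0 : 0 ≤ Q := Real.rpow_nonneg hC0 _
  have hQ : QGP p x xs Q := fun f hf A hA => PP_le_of_pNorm_le hp0 hC0 (hC f hf A hA)
  obtain ⟨K, hK0, hK⟩ := star hp0 hp1 hbasis hQ0 hQ
  obtain ⟨X, hX⟩ := hbasis.norm_ub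
  have hX0 : 0 ≤ X := (pNorm_nonneg _).trans (hX 0)
  have hXP : ∀ n, PP p (x n) ≤ X ^ p := fun n => by
    rw [← pNorm_rpow hp0]
    exact Real.rpow_le_rpow (pNorm_nonneg _) (hX n) hp0.le
  have hXp : 0 ≤ X ^ p := Real.rpow_nonneg hX0 _
  refine ⟨(1 + Q + X ^ p * K) ^ (1 / p), Real.one_le_rpow (by nlinarith [mul_nonneg hXp hK0])
    (by positivity), fun f hf A _ hA B hBA => ?_⟩
  refine pNorm_le_of_PP_le hp0 (by positivity) ?_
  classical
  set a : ℕ → ℝ := fun n => xs n f with ha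
  set g : ℕ → ℝ := fun j => f j - ∑ n ∈ B, xs n f * x n j with hg
  have hge : g = f + fun j => (-1) * lc x B a j := by
    funext j
    simp [hg, lc, ha, sub_eq_add_neg]
  have hm := lc_mem hp0 hp1 hbasis.mem
  have hgm : MemLpSeq p g := by
    rw [hge]; exact mem_add hp0 hp1 hf (mem_smul _ (hm B a))
  have hgc : ∀ n, xs n g = if n ∈ B then 0 else a n := by
    intro n
    rw [hge, hbasis.map_add _ _ _ hf (mem_smul _ (hm B a)), hbasis.map_smul _ _ _ (hm B a),
      xs_lc hp0 hp1 hbasis]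
    split_ifs <;> simp [ha]
  set D := A \ B with hD
  have hDg : GreedySet (fun n => xs n g) D := by
    intro n hn k hk
    obtain ⟨hnA, hnB⟩ := Finset.mem_sdiff.1 hn
    simp only [hgc, if_neg hnB]
    split_ifs with hkB
    · simp
    · exact hA n hnA k fun hkA => hk (Finset.mem_sdiff.2 ⟨hkA, hkB⟩)
  have h1 : PP p (lc x D a) ≤ Q * PP p g := by
    have := hQ g hgm D hDg
    rwa [lc_congr (d := a) (fun n hn => by rw [hgc, if_neg (Finset.mem_sdiff.1 hn).2])] at this
  have hcard : (B \ A).card = D.card := Finset.card_sdiff_comm hBA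
  have h2 : PP p (lc x (B \ A) a) ≤ X ^ p * K * PP p g := by
    rcases D.eq_empty_or_nonempty with hDe | hDn
    · rw [hDe, Finset.card_empty, Finset.card_eq_zero] at hcard
      rw [hcard, lc_empty, PP_zero hp0]
      exact mul_nonneg (mul_nonneg hXp hK0) (PP_nonneg _)
    · obtain ⟨m, hmD, hmin⟩ := Finset.exists_min_image D (fun n => |a n|) hDn
      have hs := hK g hgm |a m| D (abs_nonneg _) hDg (fun n hn => by
        rw [hgc, if_neg (Finset.mem_sdiff.1 hn).2]; exact hmin n hn)
      calc PP p (lc x (B \ A) a) ≤ ∑ n ∈ B \ A, |a n| ^ p * PP p (x n) :=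
            PP_lc_le hp0 hp1 hbasis.mem _ _
        _ ≤ ∑ n ∈ B \ A, |a m| ^ p * X ^ p := by
            refine Finset.sum_le_sum fun n hn => ?_
            have : |a n| ≤ |a m| :=
              hA m (Finset.mem_sdiff.1 hmD).1 n (Finset.mem_sdiff.1 hn).2
            exact mul_le_mul (Real.rpow_le_rpow (abs_nonneg _) this hp0.le) (hXP n)
              (PP_nonneg _) (Real.rpow_nonneg (abs_nonneg _) _)
        _ = X ^ p * (|a m| ^ p * D.card) := by
            rw [Finset.sum_const, hcard, nsmul_eq_mul]; ring
        _ ≤ X ^ p * (K * PP p g) := by gcongr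
        _ = _ := by ring
  have hdec : (fun j => f j - ∑ n ∈ A, xs n f * x n j)
      = (g + lc x (B \ A) a) + fun j => (-1) * lc x D a j := by
    funext j
    have e1 := Finset.sum_sdiff_sub_sum_sdiff (s₁ := A) (s₂ := B) (f := fun n => xs n f * x n j)
    simp only [Pi.add_apply, hg, lc, ha, hD]
    linarith
  rw [hdec]
  have h3 := PP_add hp0 hp1 (mem_add hp0 hp1 hgm (hm (B \ A) a)) (mem_smul (-1) (hm D a))
  have h4 := PP_add hp0 hp1 hgm (hm (B \ A) a)
  rw [PP_smul, abs_neg, abs_one, Real.one_rpow, one_mul] at h3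
  linarith
end

section
/- Let X be a GT space and let (x_n)_{n∈ℕ} together with (x_n*)_{n∈ℕ} be a quasi-greedy basis of X. Then ℓ_1 embeds in X via the basis and X embeds in weak-ℓ_1 via the basis; i.e., there is a constant C such that: (a) for every real sequence (a_n) with Σ_n |a_n| < ∞, the series Σ_n a_n x_n converges in X and ‖Σ_n a_n x_n‖ ≤ C·Σ_n |a_n|; and (b) for every f ∈ X and every t > 0, t times the number of indices n with |x_n*(f)| ≥ t is at most C·‖f‖. -/
open scoped BigOperators ENNReal

/-- `X` is a GT space: every bounded operator into `ℓ_2` is absolutely summing,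
with the absolutely summing norm controlled by `D·‖T‖`. -/
def IsGTSpace (X : Type*) [NormedAddCommGroup X] [NormedSpace ℝ X] : Prop :=
  ∃ D : ℝ, ∀ T : X →L[ℝ] lp (fun _ : ℕ => ℝ) 2, ∀ (B : Finset ℕ) (f : ℕ → X),
    ∃ ε : ℕ → ℝ, (∀ k, ε k = 1 ∨ ε k = -1) ∧
      ∑ k ∈ B, ‖T (f k)‖ ≤ D * ‖T‖ * ‖∑ k ∈ B, ε k • f k‖

/-- `(x_n)` together with bounded linear functionals `(x_n^*)` is a
(semi-normalized, fundamental, M-bounded Markushevich) basis of `X`. -/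
structure IsXBasis {X : Type*} [NormedAddCommGroup X] [NormedSpace ℝ X]
    (x : ℕ → X) (xs : ℕ → X →L[ℝ] ℝ) : Prop where
  biorth : ∀ m n, xs m (x n) = if m = n then (1 : ℝ) else 0
  dense : ∀ f : X, ∀ ε > 0, ∃ (A : Finset ℕ) (c : ℕ → ℝ), ‖f - ∑ n ∈ A, c n • x n‖ < ε
  norm_lb : ∃ c > 0, ∀ n, c ≤ ‖x n‖
  norm_ub : ∃ C : ℝ, ∀ n, ‖x n‖ ≤ C
  dual_ub : ∃ b : ℝ, ∀ n, ‖xs n‖ ≤ b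

/-- The sign function, with the convention `sgn 0 = 1`. -/
noncomputable def sgn (a : ℝ) : ℝ := if a = 0 then 1 else a / |a|

/-- The basis has the bounded restricted truncation operator property:
`‖U(f,A)‖ ≤ C₀·‖f‖` for every greedy set `A` of `f`, where
`U(f,A) = (min_{n∈A} |x_n^*(f)|)·∑_{n∈A} sgn(x_n^*(f))·x_n`. -/
def BRTP {X : Type*} [NormedAddCommGroup X] [NormedSpace ℝ X]
    (x : ℕ → X) (xs : ℕ → X →L[ℝ] ℝ) : Prop :=
  ∃ C₀ ≥ (1 : ℝ), ∀ (f : X) (A : Finset ℕ) (h : A.Nonempty),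
    GreedySet (fun n => xs n f) A →
    ‖(A.inf' h fun n => |xs n f|) • ∑ n ∈ A, sgn (xs n f) • x n‖ ≤ C₀ * ‖f‖

/-- The basis is quasi-greedy: greedy projections are uniformly bounded. -/
def QuasiGreedyX {X : Type*} [NormedAddCommGroup X] [NormedSpace ℝ X]
    (x : ℕ → X) (xs : ℕ → X →L[ℝ] ℝ) : Prop :=
  ∃ C₀ ≥ (1 : ℝ), ∀ (f : X) (A : Finset ℕ), GreedySet (fun n => xs n f) A →
    ‖∑ n ∈ A, xs n f • x n‖ ≤ C₀ * ‖f‖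

lemma aux_layer (L b : ℝ) (hL : 0 ≤ L) (a : ℕ → ℝ) : ∀ (N : ℕ) (A : Finset ℕ), A.card = N →
    (∀ n ∈ A, a n ≤ b) →
    (∀ t : ℝ, 0 < t → ∀ s ⊆ A, (∀ n ∈ s, t ≤ a n) → t * (s.card : ℝ) ≤ L) →
    ∀ m : ℝ, 0 ≤ m → m ≤ b → (∀ n ∈ A, m ≤ a n) →
    ∑ n ∈ A, (a n ^ 2 - m ^ 2) ≤ 2 * L * (b - m) := by
  intro N
  induction N with
  | zero =>
    intro A hA _ _ m _ hmb _
    rw [Finset.card_eq_zero] at hA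
    subst hA
    simp only [Finset.sum_empty]
    have : 0 ≤ b - m := by linarith
    positivity
  | succ N ih =>
    intro A hA hb hcard m hm hmb hmA
    have hne : A.Nonempty := by
      rw [← Finset.card_pos]; omega
    obtain ⟨k, hk, hmin⟩ := Finset.exists_min_image A a hne
    have h1 := ih (A.erase k) (by rw [Finset.card_erase_of_mem hk]; omega)
      (fun n hn => hb n (Finset.mem_of_mem_erase hn))
      (fun t ht s hs h => hcard t ht s (hs.trans (Finset.erase_subset _ _)) h)
      (a k) (hm.trans (hmA k hk)) (hb k hk) (fun n hn => hmin n (Finset.mem_of_mem_erase hn))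
    have h2 : ∑ n ∈ A, (a n ^ 2 - m ^ 2)
        = ∑ n ∈ A.erase k, (a n ^ 2 - a k ^ 2) + (A.card : ℝ) * (a k ^ 2 - m ^ 2) := by
      have e1 : ∑ n ∈ A.erase k, (a n ^ 2 - a k ^ 2) = ∑ n ∈ A, (a n ^ 2 - a k ^ 2) := by
        rw [← Finset.add_sum_erase A _ hk]; simp
      rw [e1]
      simp only [Finset.sum_sub_distrib, Finset.sum_const, nsmul_eq_mul]
      ring
    have hmk := hmA k hk
    have h3 : a k * (A.card : ℝ) ≤ L := by
      rcases (hm.trans hmk).eq_or_lt with h | h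
      · rw [← h]; simpa using hL
      · exact hcard _ h A le_rfl hmin
    have h4 : (A.card : ℝ) * (a k ^ 2 - m ^ 2) ≤ 2 * L * (a k - m) := by
      have h5 : (A.card : ℝ) * (a k + m) ≤ 2 * L := by
        have : (A.card : ℝ) * m ≤ A.card * a k := by gcongr
        linarith
      calc (A.card : ℝ) * (a k ^ 2 - m ^ 2) = ((A.card : ℝ) * (a k + m)) * (a k - m) := by ring
        _ ≤ 2 * L * (a k - m) := mul_le_mul_of_nonneg_right h5 (by linarith)
    rw [h2]; linarith

lemma aux_trunc {X : Type*} [NormedAddCommGroup X] [NormedSpace ℝ X]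
    (x : ℕ → X) (a : ℕ → ℝ) (M : ℝ)
    (hM : ∀ A : Finset ℕ, GreedySet a A → ‖∑ n ∈ A, a n • x n‖ ≤ M) :
    ∀ (N : ℕ) (G : Finset ℕ), G.card = N → GreedySet a G → (∀ n ∈ G, 0 < |a n|) →
    ∀ w : ℝ, 0 ≤ w → (∀ n ∈ G, |a n|⁻¹ ≤ w) →
    ‖w • ∑ n ∈ G, a n • x n - ∑ n ∈ G, (|a n|⁻¹ * a n) • x n‖ ≤ w * M := by
  have hM0 : 0 ≤ M := by simpa using hM ∅ (by intro n hn; simp at hn)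
  intro N
  induction N with
  | zero =>
    intro G hG _ _ w hw _
    rw [Finset.card_eq_zero] at hG
    subst hG
    simp only [Finset.sum_empty, smul_zero, sub_zero, norm_zero]
    positivity
  | succ N ih =>
    intro G hG hgr hpos w hw hwG
    have hne : G.Nonempty := by
      rw [← Finset.card_pos]; omega
    obtain ⟨k, hk, hmin⟩ := Finset.exists_min_image G (fun n => |a n|) hne
    have h1 := ih (G.erase k) (by rw [Finset.card_erase_of_mem hk]; omega)
      (by
        intro n hn j hj
        have hnG := Finset.mem_of_mem_erase hn
        by_cases hjk : j = k
        · subst hjk; exact hmin n hnG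
        · exact hgr n hnG j (fun h => hj (Finset.mem_erase.2 ⟨hjk, h⟩)))
      (fun n hn => hpos n (Finset.mem_of_mem_erase hn))
      (|a k|⁻¹) (by positivity)
      (fun n hn => inv_anti₀ (hpos k hk) (hmin n (Finset.mem_of_mem_erase hn)))
    have e : w • ∑ n ∈ G, a n • x n - ∑ n ∈ G, (|a n|⁻¹ * a n) • x n
        = (w - |a k|⁻¹) • ∑ n ∈ G, a n • x n
          + (|a k|⁻¹ • ∑ n ∈ G.erase k, a n • x n - ∑ n ∈ G.erase k, (|a n|⁻¹ * a n) • x n) := by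
      rw [← Finset.add_sum_erase G _ hk, ← Finset.add_sum_erase G _ hk]
      module
    rw [e]
    have hwk := hwG k hk
    calc _ ≤ ‖(w - |a k|⁻¹) • ∑ n ∈ G, a n • x n‖ + _ := norm_add_le _ _
      _ ≤ (w - |a k|⁻¹) * M + |a k|⁻¹ * M := by
        refine add_le_add ?_ h1
        rw [norm_smul, Real.norm_of_nonneg (by linarith)]
        exact mul_le_mul_of_nonneg_left (hM G hgr) (by linarith)
      _ = w * M := by ring

lemma aux_coef {X : Type*} [NormedAddCommGroup X] [NormedSpace ℝ X]
    (x : ℕ → X) (xs : ℕ → X →L[ℝ] ℝ) (hb : IsXBasis x xs) (G : Finset ℕ) (d : ℕ → ℝ) (m : ℕ) :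
    xs m (∑ n ∈ G, d n • x n) = if m ∈ G then d m else 0 := by
  simp [map_sum, hb.biorth]

lemma aux_sub {X : Type*} [NormedAddCommGroup X] [NormedSpace ℝ X]
    (x : ℕ → X) (xs : ℕ → X →L[ℝ] ℝ) (hb : IsXBasis x xs) (C₀ : ℝ)
    (hq : ∀ (f : X) (A : Finset ℕ), GreedySet (fun n => xs n f) A →
      ‖∑ n ∈ A, xs n f • x n‖ ≤ C₀ * ‖f‖)
    (G s : Finset ℕ) (hs : s ⊆ G) (d : ℕ → ℝ) (hd : ∀ n ∈ G, |d n| = 1) :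
    ‖∑ n ∈ s, d n • x n‖ ≤ C₀ * ‖∑ n ∈ G, d n • x n‖ := by
  have h := hq (∑ n ∈ G, d n • x n) s (by
    intro n hn k hk
    simp only [aux_coef x xs hb, hs hn, if_true, hd n (hs hn)]
    split_ifs with h
    · rw [hd k h]
    · simp)
  convert h using 2
  refine Finset.sum_congr rfl fun n hn => ?_
  rw [aux_coef x xs hb, if_pos (hs hn)]

lemma aux_unc {X : Type*} [NormedAddCommGroup X] [NormedSpace ℝ X]
    (x : ℕ → X) (xs : ℕ → X →L[ℝ] ℝ) (hb : IsXBasis x xs) (C₀ : ℝ)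
    (hq : ∀ (f : X) (A : Finset ℕ), GreedySet (fun n => xs n f) A →
      ‖∑ n ∈ A, xs n f • x n‖ ≤ C₀ * ‖f‖)
    (G s : Finset ℕ) (hs : s ⊆ G) (d : ℕ → ℝ) (hd : ∀ n ∈ G, |d n| = 1)
    (e : ℕ → ℝ) (he : ∀ n, e n = 1 ∨ e n = -1) :
    ‖∑ n ∈ s, e n • x n‖ ≤ 2 * C₀ * ‖∑ n ∈ G, d n • x n‖ := by
  have h1 := aux_sub x xs hb C₀ hq G (s.filter (fun n => e n = d n))
    ((Finset.filter_subset _ _).trans hs) d hd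
  have h2 := aux_sub x xs hb C₀ hq G (s.filter (fun n => ¬ e n = d n))
    ((Finset.filter_subset _ _).trans hs) d hd
  have e1 : ∑ n ∈ s, e n • x n = ∑ n ∈ s.filter (fun n => e n = d n), d n • x n
      - ∑ n ∈ s.filter (fun n => ¬ e n = d n), d n • x n := by
    rw [← Finset.sum_filter_add_sum_filter_not s (fun n => e n = d n), sub_eq_add_neg,
      ← Finset.sum_neg_distrib]
    congr 1
    · refine Finset.sum_congr rfl fun n hn => ?_
      rw [(Finset.mem_filter.1 hn).2]
    · refine Finset.sum_congr rfl fun n hn => ?_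
      obtain ⟨hn1, hn2⟩ := Finset.mem_filter.1 hn
      have : e n = - d n := by
        have h3 := hd n (hs hn1)
        rcases (abs_eq zero_le_one).1 h3 with h | h <;> rcases he n with h' | h' <;>
          simp_all
      rw [this, neg_smul]
  rw [e1]
  linarith [norm_sub_le (∑ n ∈ s.filter (fun n => e n = d n), d n • x n)
    (∑ n ∈ s.filter (fun n => ¬ e n = d n), d n • x n)]

lemma aux_fin {X : Type*} [NormedAddCommGroup X] [NormedSpace ℝ X]
    (x : ℕ → X) (xs : ℕ → X →L[ℝ] ℝ) (hb : IsXBasis x xs) (f : X) (t : ℝ) (ht : 0 < t) :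
    {n | t ≤ |xs n f|}.Finite := by
  obtain ⟨b, hbb⟩ := hb.dual_ub
  have hb0 : 0 ≤ b := (norm_nonneg _).trans (hbb 0)
  obtain ⟨A, c, hA⟩ := hb.dense f (t / (b + 1)) (by positivity)
  refine A.finite_toSet.subset fun n hn => ?_
  by_contra hnA
  have h1 : xs n (f - ∑ n ∈ A, c n • x n) = xs n f := by
    rw [map_sub, aux_coef x xs hb, if_neg (by simpa using hnA), sub_zero]
  have h2 := (xs n).le_opNorm (f - ∑ n ∈ A, c n • x n)
  rw [h1, Real.norm_eq_abs] at h2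
  have hn' : t ≤ |xs n f| := hn
  rw [lt_div_iff₀ (by positivity)] at hA
  have h3 := mul_le_mul_of_nonneg_right (hbb n) (norm_nonneg (f - ∑ n ∈ A, c n • x n))
  nlinarith [norm_nonneg (f - ∑ n ∈ A, c n • x n)]

noncomputable def auxT {X : Type*} [NormedAddCommGroup X] [NormedSpace ℝ X]
    (xs : ℕ → X →L[ℝ] ℝ) (A : Finset ℕ) : X →L[ℝ] lp (fun _ : ℕ => ℝ) 2 :=
  ∑ k ∈ A, (xs k).smulRight (lp.single (E := fun _ : ℕ => ℝ) 2 k (1 : ℝ))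

lemma auxT_norm {X : Type*} [NormedAddCommGroup X] [NormedSpace ℝ X]
    (xs : ℕ → X →L[ℝ] ℝ) (A : Finset ℕ) (f : X) :
    ‖auxT xs A f‖ ^ 2 = ∑ k ∈ A, |xs k f| ^ 2 := by
  have h : auxT xs A f = ∑ k ∈ A, lp.single (E := fun _ : ℕ => ℝ) 2 k (xs k f) := by
    simp only [auxT, ContinuousLinearMap.sum_apply, ContinuousLinearMap.smulRight_apply]
    refine Finset.sum_congr rfl fun k _ => ?_
    rw [← lp.single_smul]; simp
  have h2 := lp.norm_sum_single (E := fun _ : ℕ => ℝ) (p := 2) (by simp) (fun k => xs k f) A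
  rw [h]
  simpa using h2

lemma aux_main {X : Type*} [NormedAddCommGroup X] [NormedSpace ℝ X]
    (x : ℕ → X) (xs : ℕ → X →L[ℝ] ℝ) (hb : IsXBasis x xs) (C₀ : ℝ) (hC : 1 ≤ C₀)
    (hq : ∀ (f : X) (A : Finset ℕ), GreedySet (fun n => xs n f) A →
      ‖∑ n ∈ A, xs n f • x n‖ ≤ C₀ * ‖f‖)
    (D : ℝ) (hD : 1 ≤ D)
    (hGT : ∀ T : X →L[ℝ] lp (fun _ : ℕ => ℝ) 2, ∀ (B : Finset ℕ) (f : ℕ → X),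
    ∃ ε : ℕ → ℝ, (∀ k, ε k = 1 ∨ ε k = -1) ∧
      ∑ k ∈ B, ‖T (f k)‖ ≤ D * ‖T‖ * ‖∑ k ∈ B, ε k • f k‖)
    (A s : Finset ℕ) (hs : s ⊆ A) (f : X) (t : ℝ) (ht : 0 < t) (hst : ∀ n ∈ s, t ≤ |xs n f|) :
    t * (s.card : ℝ) ≤ 4 * D * C₀ ^ 2 * ‖auxT xs A‖ * ‖f‖ := by
  obtain ⟨e, he, h1⟩ := hGT (auxT xs A) s x
  have h2 : ∑ k ∈ s, ‖auxT xs A (x k)‖ = s.card := by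
    rw [Finset.sum_congr rfl (g := fun _ => (1 : ℝ))]
    · simp
    · intro k hk
      have h := auxT_norm xs A (x k)
      have h' : ∑ j ∈ A, |xs j (x k)| ^ 2 = 1 := by
        rw [Finset.sum_eq_single k]
        · simp [hb.biorth]
        · intro j _ hj; simp [hb.biorth, hj]
        · intro h; exact absurd (hs hk) h
      rw [h'] at h
      nlinarith [norm_nonneg (auxT xs A (x k))]
  rw [h2] at h1
  set G := (aux_fin x xs hb f t ht).toFinset with hG
  have hGm : ∀ n, n ∈ G ↔ t ≤ |xs n f| := by intro n; simp [hG]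
  have hgr : GreedySet (fun n => xs n f) G := by
    intro n hn k hk
    rw [hGm] at hn hk
    simp only
    linarith
  have hpos : ∀ n ∈ G, 0 < |xs n f| := fun n hn => ht.trans_le ((hGm n).1 hn)
  have h3 := aux_trunc x (fun n => xs n f) (C₀ * ‖f‖) (hq f) _ G rfl hgr hpos t⁻¹ (by positivity)
    (fun n hn => inv_anti₀ ht ((hGm n).1 hn))
  have h4 := hq f G hgr
  have h5 := aux_unc x xs hb C₀ hq G s (fun n hn => (hGm n).2 (hst n hn))
    (fun n => |xs n f|⁻¹ * xs n f) (by
      intro n hn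
      rw [abs_mul, abs_inv, abs_abs, inv_mul_cancel₀ (hpos n hn).ne']) e he
  set S := ∑ n ∈ G, xs n f • x n
  set V := ∑ n ∈ G, (|xs n f|⁻¹ * xs n f) • x n
  have h6 : ‖V‖ ≤ 2 * t⁻¹ * (C₀ * ‖f‖) := by
    have : V = t⁻¹ • S - (t⁻¹ • S - V) := by abel
    have h7 := norm_sub_le (t⁻¹ • S) (t⁻¹ • S - V)
    rw [← this, norm_smul, Real.norm_of_nonneg (by positivity)] at h7
    have : t⁻¹ * ‖S‖ ≤ t⁻¹ * (C₀ * ‖f‖) := by gcongr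
    linarith
  calc t * (s.card : ℝ) ≤ t * (D * ‖auxT xs A‖ * (2 * C₀ * (2 * t⁻¹ * (C₀ * ‖f‖)))) := by
        gcongr
        refine h1.trans ?_
        gcongr
        refine h5.trans ?_
        gcongr
    _ = _ := by field_simp; ring

lemma aux_K {X : Type*} [NormedAddCommGroup X] [NormedSpace ℝ X]
    (x : ℕ → X) (xs : ℕ → X →L[ℝ] ℝ) (hb : IsXBasis x xs) (C₀ : ℝ) (hC : 1 ≤ C₀)
    (hq : ∀ (f : X) (A : Finset ℕ), GreedySet (fun n => xs n f) A →
      ‖∑ n ∈ A, xs n f • x n‖ ≤ C₀ * ‖f‖)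
    (D : ℝ) (hD : 1 ≤ D)
    (hGT : ∀ T : X →L[ℝ] lp (fun _ : ℕ => ℝ) 2, ∀ (B : Finset ℕ) (f : ℕ → X),
    ∃ ε : ℕ → ℝ, (∀ k, ε k = 1 ∨ ε k = -1) ∧
      ∑ k ∈ B, ‖T (f k)‖ ≤ D * ‖T‖ * ‖∑ k ∈ B, ε k • f k‖)
    (b : ℝ) (hbb : ∀ n, ‖xs n‖ ≤ b) (A : Finset ℕ) :
    ‖auxT xs A‖ ≤ 8 * D * C₀ ^ 2 * b := by
  have hb0 : 0 ≤ b := (norm_nonneg _).trans (hbb 0)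
  set K := ‖auxT xs A‖ with hK
  have hK0 : 0 ≤ K := norm_nonneg _
  set R := 8 * D * C₀ ^ 2 * b with hR
  have hR0 : 0 ≤ R := by positivity
  have key : ∀ f, ‖auxT xs A f‖ ≤ √(R * K) * ‖f‖ := by
    intro f
    have h := aux_layer (4 * D * C₀ ^ 2 * K * ‖f‖) (b * ‖f‖) (by positivity) (fun n => |xs n f|)
      _ A rfl (fun n _ => by
        have := (xs n).le_opNorm f
        rw [Real.norm_eq_abs] at this
        exact this.trans (by gcongr; exact hbb n))
      (fun t ht s hs hst => aux_main x xs hb C₀ hC hq D hD hGT A s hs f t ht hst)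
      0 le_rfl (by positivity) (fun n _ => abs_nonneg _)
    have h2 : ‖auxT xs A f‖ ^ 2 ≤ (√(R * K) * ‖f‖) ^ 2 := by
      rw [auxT_norm, mul_pow, Real.sq_sqrt (by positivity), hR]
      simp only [ne_eq, OfNat.ofNat_ne_zero, not_false_eq_true, zero_pow, sub_zero] at h
      linarith
    exact (pow_le_pow_iff_left₀ (norm_nonneg _) (by positivity) two_ne_zero).1 h2
  have h1 : K ≤ √(R * K) := (auxT xs A).opNorm_le_bound (by positivity) key
  have h2 : K ^ 2 ≤ R * K := (Real.le_sqrt hK0 (by positivity)).1 h1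
  by_contra hlt
  push Not at hlt
  nlinarith

/-- For a quasi-greedy basis of a GT space `X`: (a) `ℓ_1` embeds in `X` via the
basis, and (b) `X` embeds in weak-`ℓ_1` via the basis. -/
theorem stmt13 {X : Type*} [NormedAddCommGroup X] [NormedSpace ℝ X] [CompleteSpace X]
    (hGT : IsGTSpace X) (x : ℕ → X) (xs : ℕ → X →L[ℝ] ℝ)
    (hbasis : IsXBasis x xs) (hqg : QuasiGreedyX x xs) :
    ∃ C : ℝ, 0 < C ∧
      (∀ a : ℕ → ℝ, Summable (fun n => |a n|) →
        ∃ f : X, Filter.Tendsto (fun N => ∑ n ∈ Finset.range N, a n • x n)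
            Filter.atTop (nhds f) ∧
          ‖f‖ ≤ C * ∑' n, |a n|) ∧
      (∀ f : X, ∀ t : ℝ, 0 < t → ∀ s : Finset ℕ,
        (∀ n ∈ s, t ≤ |xs n f|) → t * (s.card : ℝ) ≤ C * ‖f‖) := by
  obtain ⟨D₀, hGT⟩ := hGT
  obtain ⟨C₀, hC, hq⟩ := hqg
  obtain ⟨b, hbb⟩ := hbasis.dual_ub
  obtain ⟨c, hc⟩ := hbasis.norm_ub
  have hb0 : 0 ≤ b := (norm_nonneg _).trans (hbb 0)
  have hc0 : 0 ≤ c := (norm_nonneg _).trans (hc 0)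
  set D := max D₀ 1 with hDdef
  have hD : 1 ≤ D := le_max_right _ _
  have hGT' : ∀ T : X →L[ℝ] lp (fun _ : ℕ => ℝ) 2, ∀ (B : Finset ℕ) (f : ℕ → X),
    ∃ ε : ℕ → ℝ, (∀ k, ε k = 1 ∨ ε k = -1) ∧
      ∑ k ∈ B, ‖T (f k)‖ ≤ D * ‖T‖ * ‖∑ k ∈ B, ε k • f k‖ := by
    intro T B f
    obtain ⟨e, he, h⟩ := hGT T B f
    refine ⟨e, he, h.trans ?_⟩
    gcongr
    exact le_max_left _ _
  refine ⟨c + 4 * D * C₀ ^ 2 * (8 * D * C₀ ^ 2 * b) + 1, by positivity, ?_, ?_⟩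
  · intro a ha
    have hbd : ∀ n, ‖a n • x n‖ ≤ c * |a n| := by
      intro n
      rw [norm_smul, Real.norm_eq_abs, mul_comm]
      gcongr
      exact hc n
    have hsum : Summable (fun n => a n • x n) := Summable.of_norm_bounded (ha.mul_left c) hbd
    refine ⟨∑' n, a n • x n, hsum.hasSum.tendsto_sum_nat, ?_⟩
    have h1 : ‖∑' n, a n • x n‖ ≤ ∑' n, c * |a n| :=
      tsum_of_norm_bounded (ha.mul_left c).hasSum hbd
    rw [tsum_mul_left] at h1
    refine h1.trans ?_
    have h0 : 0 ≤ ∑' n, |a n| := tsum_nonneg fun n => abs_nonneg _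
    have h2 : 0 ≤ 4 * D * C₀ ^ 2 * (8 * D * C₀ ^ 2 * b) := by positivity
    gcongr
    linarith
  · intro f t ht s hst
    have h1 := aux_main x xs hbasis C₀ hC hq D hD hGT' s s le_rfl f t ht hst
    have h2 := aux_K x xs hbasis C₀ hC hq D hD hGT' b hbb s
    refine h1.trans ?_
    gcongr
    have : 4 * D * C₀ ^ 2 * ‖auxT xs s‖ ≤ 4 * D * C₀ ^ 2 * (8 * D * C₀ ^ 2 * b) := by gcongr
    linarith
end
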